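/- Let (G,λ) = (G₁, …, G_T) be a temporal graph on n vertices, let Δ ≤ T, and let t ∈ [T] be a time slot such that every Δ-window containing t contains at least n² time slots t' ≠ t with G_{t'} = G_t. Let (G',λ') be the temporal graph obtained from (G,λ) by replacing the snapshot at time slot t with the trivial (edgeless) snapshot. Then, for every k ≥ 2, (G,λ) admits a proper sliding Δ-window temporal k-coloring if and only if (G',λ') admits a proper sliding Δ-window temporal k-coloring. -/

import Mathlib

/-- `φ` is a proper sliding `Δ`-window temporal `k`-coloring of the temporal
graph with snapshots `Gs` over the time slots `[a,b]`. -/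
def IsSWTempColoring {W : Type*} {k : ℕ} (Gs : ℕ → SimpleGraph W)
    (a b Δ : ℕ) (φ : W → ℕ → Fin k) : Prop :=
  ∀ t, a ≤ t → t + Δ - 1 ≤ b →
    ∀ u v : W, (∃ i ∈ Finset.Icc t (t + Δ - 1), (Gs i).Adj u v) →
      ∃ i ∈ Finset.Icc t (t + Δ - 1), (Gs i).Adj u v ∧ φ u i ≠ φ v i

/-- In a window with at least `n²` copies there is a copy no edge needs. -/
lemma exists_unneeded {V : Type*} [Fintype V] [Nonempty V] {k : ℕ} (Gs : ℕ → SimpleGraph V)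
    (s e t : ℕ) (φ : V → ℕ → Fin k)
    (h : Fintype.card V ^ 2 ≤ {t' ∈ Set.Icc s e | t' ≠ t ∧ Gs t' = Gs t}.ncard) :
    ∃ j, s ≤ j ∧ j ≤ e ∧ j ≠ t ∧ Gs j = Gs t ∧
      ∀ u v, (Gs j).Adj u v → φ u j ≠ φ v j →
        ∃ a b, s ≤ a ∧ a < j ∧ j < b ∧ b ≤ e ∧ (Gs a).Adj u v ∧ φ u a ≠ φ v a ∧
          (Gs b).Adj u v ∧ φ u b ≠ φ v b := by
  classical
  let S : V → V → Set ℕ := fun u v => {i | (s ≤ i ∧ i ≤ e) ∧ (Gs i).Adj u v ∧ φ u i ≠ φ v i}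
  have Ssymm : ∀ u v, S u v = S v u := by
    intro u v
    ext i
    simp only [S, Set.mem_ofPred_eq, (Gs i).adj_comm u v, ne_comm (a := φ u i)]
  have Sbdd : ∀ u v, BddAbove (S u v) := fun u v => ⟨e, fun i hi => hi.1.2⟩
  let o := Fintype.equivFin V
  let f : V × V → ℕ := fun p => if o p.1 < o p.2 then sInf (S p.1 p.2) else sSup (S p.1 p.2)
  let I : Finset ℕ := (Finset.univ : Finset V).offDiag.image f
  have hI : I.card < Fintype.card V ^ 2 := by
    refine lt_of_le_of_lt Finset.card_image_le ?_
    rw [Finset.offDiag_card, Finset.card_univ]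
    have : 0 < Fintype.card V := Fintype.card_pos
    rw [sq]
    have := Nat.mul_pos this this
    omega
  obtain ⟨j, ⟨⟨hj1, hj2⟩, hjt, hjG⟩, hjI⟩ : ∃ j ∈ {t' ∈ Set.Icc s e | t' ≠ t ∧ Gs t' = Gs t},
      j ∉ (I : Set ℕ) := by
    apply Set.exists_mem_notMem_of_ncard_lt_ncard
    · rw [Set.ncard_coe_finset]; omega
    · exact I.finite_toSet
  refine ⟨j, hj1, hj2, hjt, hjG, ?_⟩
  have key : ∀ u v, o u < o v → j ∈ S u v →
      sInf (S u v) ∈ S u v ∧ sInf (S u v) < j ∧ sSup (S u v) ∈ S u v ∧ j < sSup (S u v) := by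
    intro u v huv hj
    have hne : u ≠ v := by rintro rfl; exact lt_irrefl _ huv
    have h1 : sInf (S u v) ≠ j := by
      intro h
      apply hjI
      simp only [I, Finset.coe_image, Set.mem_image]
      exact ⟨(u, v), by simpa using hne, by simp [f, huv, h]⟩
    have h2 : sSup (S u v) ≠ j := by
      intro h
      apply hjI
      simp only [I, Finset.coe_image, Set.mem_image]
      exact ⟨(v, u), by simpa using hne.symm, by simp [f, huv.not_gt, h, Ssymm v u]⟩
    exact ⟨Nat.sInf_mem ⟨j, hj⟩, lt_of_le_of_ne (Nat.sInf_le hj) h1,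
      Nat.sSup_mem ⟨j, hj⟩ (Sbdd u v), lt_of_le_of_ne (le_csSup (Sbdd u v) hj) h2.symm⟩
  intro u v hadj hφ
  have hjS : j ∈ S u v := ⟨⟨hj1, hj2⟩, hadj, hφ⟩
  have : ∃ a ∈ S u v, ∃ b ∈ S u v, a < j ∧ j < b := by
    rcases lt_trichotomy (o u) (o v) with hlt | heq | hgt
    · obtain ⟨h1, h2, h3, h4⟩ := key u v hlt hjS
      exact ⟨_, h1, _, h3, h2, h4⟩
    · exact absurd (o.injective heq) hadj.ne
    · rw [Ssymm] at hjS ⊢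
      obtain ⟨h1, h2, h3, h4⟩ := key v u hgt hjS
      exact ⟨_, h1, _, h3, h2, h4⟩
  obtain ⟨a, ha, b, hb, h1, h2⟩ := this
  exact ⟨a, b, ha.1.1, h1, h2, hb.1.2, ha.2.1, ha.2.2, hb.2.1, hb.2.2⟩

lemma exists_good {V : Type*} [Fintype V] [Nonempty V] (Gs : ℕ → SimpleGraph V) (T Δ t k : ℕ)
    (hrep : ∀ s, 1 ≤ s → s + Δ - 1 ≤ T → s ≤ t → t ≤ s + Δ - 1 →
      Fintype.card V ^ 2 ≤
        {t' ∈ Set.Icc s (s + Δ - 1) | t' ≠ t ∧ Gs t' = Gs t}.ncard) (m : ℕ) :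
    ∀ φ : V → ℕ → Fin k, IsSWTempColoring Gs 1 T Δ φ →
      {i ∈ Set.Icc 1 T | ∃ v, φ v i ≠ φ v t}.ncard = m →
      ∃ ψ : V → ℕ → Fin k, IsSWTempColoring Gs 1 T Δ ψ ∧
        ∀ s, 1 ≤ s → s + Δ - 1 ≤ T → s ≤ t → t ≤ s + Δ - 1 →
          ∃ j, s ≤ j ∧ j ≤ s + Δ - 1 ∧ j ≠ t ∧ Gs j = Gs t ∧ ∀ v, ψ v j = ψ v t := by
  classical
  induction m using Nat.strong_induction_on with
  | _ m ih =>
  intro φ hφ hm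
  by_cases hall : ∀ s, 1 ≤ s → s + Δ - 1 ≤ T → s ≤ t → t ≤ s + Δ - 1 →
          ∃ j, s ≤ j ∧ j ≤ s + Δ - 1 ∧ j ≠ t ∧ Gs j = Gs t ∧ ∀ v, φ v j = φ v t
  · exact ⟨φ, hφ, hall⟩
  push Not at hall
  obtain ⟨s, hs1, hs2, hs3, hs4, hno⟩ := hall
  obtain ⟨j, hj1, hj2, hjt, hjG, hj⟩ := exists_unneeded Gs s _ t φ (hrep s hs1 hs2 hs3 hs4)
  let ψ : V → ℕ → Fin k := fun v i => if i = j then φ v t else φ v i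
  have hψ : ∀ v i, i ≠ j → ψ v i = φ v i := fun v i h => by simp [ψ, h]
  refine ih _ ?_ ψ ?_ rfl
  · rw [← hm]
    apply Set.ncard_lt_ncard
    · rw [Set.ssubset_iff_of_subset]
      · refine ⟨j, ⟨⟨by omega, by omega⟩, hno j hj1 hj2 hjt hjG⟩, ?_⟩
        rintro ⟨-, v, hv⟩
        exact hv (by simp [ψ])
      · rintro i ⟨hi, v, hv⟩
        refine ⟨hi, v, ?_⟩
        have hij : i ≠ j := by
          rintro rfl
          exact hv (by simp [ψ])
        rwa [hψ v i hij, hψ v t hjt.symm] at hv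
    · exact (Set.finite_Icc 1 T).subset fun i hi => hi.1
  · intro r hr1 hr2 u v huv
    obtain ⟨i, hi, hadj, hne⟩ := hφ r hr1 hr2 u v huv
    by_cases hij : i = j
    · subst hij
      obtain ⟨a, b, ha, hai, hib, hb, ha1, ha2, hb1, hb2⟩ := hj u v hadj hne
      rw [Finset.mem_Icc] at hi
      by_cases hra : r ≤ a
      · refine ⟨a, Finset.mem_Icc.2 ⟨hra, by omega⟩, ha1, ?_⟩
        rwa [hψ _ _ hai.ne, hψ _ _ hai.ne]
      · refine ⟨b, Finset.mem_Icc.2 ⟨by omega, by omega⟩, hb1, ?_⟩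
        rwa [hψ _ _ hib.ne', hψ _ _ hib.ne']
    · refine ⟨i, hi, hadj, ?_⟩
      rwa [hψ _ _ hij, hψ _ _ hij]

/-- let `t ∈ [T]` be a time slot such that every `Δ`-window
containing `t` contains at least `n²` other time slots `t' ≠ t` with
`G_{t'} = G_t`.  If `(G',λ')` is obtained from `(G,λ)` by replacing the
snapshot at `t` with the trivial (edgeless) snapshot, then for every `k ≥ 2`,
`(G,λ)` admits a proper sliding `Δ`-window temporal `k`-coloring iff
`(G',λ')` does. -/
theorem stmt_11 {V : Type*} [Fintype V] (Gs : ℕ → SimpleGraph V) (T Δ : ℕ)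
    (hΔ : 1 ≤ Δ) (hΔT : Δ ≤ T) (t : ℕ) (ht : t ∈ Finset.Icc 1 T)
    (hrep : ∀ s, 1 ≤ s → s + Δ - 1 ≤ T → s ≤ t → t ≤ s + Δ - 1 →
      Fintype.card V ^ 2 ≤
        {t' ∈ Set.Icc s (s + Δ - 1) | t' ≠ t ∧ Gs t' = Gs t}.ncard)
    (k : ℕ) (hk : 2 ≤ k) :
    (∃ φ : V → ℕ → Fin k, IsSWTempColoring Gs 1 T Δ φ) ↔
      (∃ φ : V → ℕ → Fin k,
        IsSWTempColoring (Function.update Gs t ⊥) 1 T Δ φ) := by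
  classical
  have hup : ∀ i, i ≠ t → Function.update Gs t ⊥ i = Gs i :=
    fun i h => Function.update_of_ne h _ _
  have hut : ∀ i u v, (Function.update Gs t ⊥ i).Adj u v → i ≠ t ∧ (Gs i).Adj u v := by
    intro i u v h
    by_cases hit : i = t
    · subst hit
      simp at h
    · rw [hup i hit] at h
      exact ⟨hit, h⟩
  constructor
  · rintro ⟨φ, hφ⟩
    rcases isEmpty_or_nonempty V with hV | hV
    · exact ⟨φ, fun _ _ _ u => hV.elim u⟩
    obtain ⟨ψ, hψ, hgood⟩ := exists_good Gs T Δ t k hrep _ φ hφ rfl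
    refine ⟨ψ, ?_⟩
    rintro s hs1 hs2 u v ⟨i, hi, hadj⟩
    obtain ⟨i', hi', hadj', hne⟩ := hψ s hs1 hs2 u v ⟨i, hi, (hut i u v hadj).2⟩
    by_cases hit : i' = t
    · subst hit
      rw [Finset.mem_Icc] at hi'
      obtain ⟨j, hj1, hj2, hjt, hjG, hj⟩ := hgood s hs1 hs2 hi'.1 hi'.2
      refine ⟨j, Finset.mem_Icc.2 ⟨hj1, hj2⟩, ?_, ?_⟩
      · rw [hup j hjt, hjG]; exact hadj'
      · rwa [hj, hj]
    · exact ⟨i', hi', by rw [hup i' hit]; exact hadj', hne⟩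
  · rintro ⟨φ, hφ⟩
    refine ⟨φ, ?_⟩
    rintro s hs1 hs2 u v ⟨i, hi, hadj⟩
    have : ∃ i ∈ Finset.Icc s (s + Δ - 1), (Function.update Gs t ⊥ i).Adj u v := by
      by_cases hit : i = t
      · subst hit
        rw [Finset.mem_Icc] at hi
        haveI : Nonempty V := ⟨u⟩
        obtain ⟨j, hj1, hj2, hjt, hjG, -⟩ :=
          exists_unneeded Gs s _ i φ (hrep s hs1 hs2 hi.1 hi.2)
        exact ⟨j, Finset.mem_Icc.2 ⟨hj1, hj2⟩, by rw [hup j hjt, hjG]; exact hadj⟩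
      · exact ⟨i, hi, by rw [hup i hit]; exact hadj⟩
    obtain ⟨i', hi', hadj', hne⟩ := hφ s hs1 hs2 u v this
    exact ⟨i', hi', (hut i' u v hadj').2, hne⟩
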